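/- Let f ∈ ℂ[x₁,…,x_{n+1}] be a strongly tame polynomial and let J ⊆ ℂ[x] be the ℂ-linear span of all polynomials (∂f/∂xᵢ)·(∂h/∂xⱼ) − (∂f/∂xⱼ)·(∂h/∂xᵢ) with h ∈ ℂ[x] and 1 ≤ i < j ≤ n+1. Then J is stable under multiplication by f, so the quotient ℂ[x]/J is a module over the polynomial ring ℂ[t] with t acting as multiplication by f, and the classes of the monomials x^β, β ∈ I, form a basis of ℂ[x]/J as a free ℂ[t]-module of rank μ = #I. (This is the statement that the forms ω_β = x^β dx, β ∈ I, freely generate the Brieskorn module H'' = Ω^{n+1}/(df ∧ dΩ^{n−1}) over ℂ[t]: identifying an (n+1)-form A·dx₁∧⋯∧dx_{n+1} with its coefficient A, the subspace of coefficients of forms in df ∧ dΩ^{n−1} is exactly J.) -/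

import Mathlib

open MvPolynomial

/-!
Write `g` for the leading form of `f` and `D_{u,i} P = (∂f/∂xᵢ) P - u ∂P/∂xᵢ`, so that the
cokernel of the `D_{u,i}` is the top cohomology of the twisted differential `df ∧ - u d`.

*Generation.* A weighted homogeneous `P` is a combination of the `x^β` plus `∑ aᵢ ∂g/∂xᵢ`. Changing
`a` by a multiple of the Euler field makes it divergence free, at the cost of a multiple of `f` and
of terms of lower weight; for a divergence-free `a` the polynomial `∑ aᵢ ∂f/∂xᵢ` lies in `J` by the
polynomial Poincaré lemma. One concludes by induction on the weight.

*Independence.* Powers of the variables lie in the Jacobian ideal of `g`, so the Koszul complex of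
the `∂g/∂xᵢ` is exact in degree one. Lowering weights with it shows that for every constant `u` the
`x^β` are independent modulo the image of the `D_{u,i}`, which contains `J`. To use all `u` at once,
regard `u` as a parameter of weight `deg f`: every polynomial reduces to a combination of the `x^β`
over `K[u]`, unique because a polynomial in `u` vanishing on the infinite field `K` is zero. Under
this reduction multiplication by `f` is, up to lower terms, multiplication by a positive multiple of
`u`, again by the Euler field. Hence the leading terms of a relation `∑ c_β(f) x^β ∈ J` vanish.
-/

section Koszul

open RingTheory.Sequence

variable {R M Q : Type*} [CommRing R] [AddCommGroup M] [Module R M] [AddCommGroup Q] [Module R Q]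

theorem exists_compAlternatingMap_eq [Module.Free R M] {Q' : Type*} [AddCommGroup Q'] [Module R Q']
    (π : Q →ₗ[R] Q') {p : ℕ} (ω : M [⋀^Fin p]→ₗ[R] Q') (hω : ∀ v, ω v ∈ LinearMap.range π) :
    ∃ ζ : M [⋀^Fin p]→ₗ[R] Q, π.compAlternatingMap ζ = ω := by
  obtain ⟨L, hL⟩ := Module.projective_lifting_property π.rangeRestrict
    (exteriorPower.alternatingMapLinearEquiv (ω.codRestrict _ hω)) π.surjective_rangeRestrict
  refine ⟨L.compAlternatingMap (exteriorPower.ιMulti R p), ?_⟩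
  ext v
  simpa using congrArg Subtype.val (LinearMap.congr_fun hL (exteriorPower.ιMulti R p v))

theorem curryLeft_alternatizeUncurryFin_smulRight (φ : Module.Dual R M) {x : M} {p : ℕ}
    {ω : M [⋀^Fin (p + 1)]→ₗ[R] Q} (hω : ω.curryLeft x = 0) :
    (AlternatingMap.alternatizeUncurryFin (φ.smulRight ω)).curryLeft x = φ x • ω := by
  ext v
  rw [AlternatingMap.curryLeft_apply_apply, AlternatingMap.alternatizeUncurryFin_apply,
    Fin.sum_univ_succ, Finset.sum_eq_zero]
  · simp [Fin.removeNth_zero]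
  · intro i _
    have hv : i.succ.removeNth (Matrix.vecCons x v) = Matrix.vecCons x (i.removeNth v) := by
      funext j
      refine Fin.cases ?_ (fun j => ?_) j <;> simp [Fin.removeNth]
    rw [hv, LinearMap.smulRight_apply, AlternatingMap.smul_apply,
      ← AlternatingMap.curryLeft_apply_apply, hω, AlternatingMap.zero_apply, smul_zero, smul_zero]

/-- Acyclicity of the Koszul complex of `x`, whose differential is contraction with `x`. The form
`h = φ ∧ ω` contracts to `r • ω`, so modulo `r` it is closed and, by induction, exact; correcting
`h` by a lift of its primitive makes it divisible by `r`. -/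
theorem exists_eq_curryLeft_of_isWeaklyRegular [Module.Free R M] [Module.Finite R M]
    [Nontrivial R] (x : M) {rs : List R} (hreg : IsWeaklyRegular Q rs)
    (hrs : ∀ r ∈ rs, ∃ φ : Module.Dual R M, φ x = r) {q : ℕ}
    (hq : Module.finrank R M ≤ q + rs.length) {ω : M [⋀^Fin (q + 1)]→ₗ[R] Q}
    (hω : ω.curryLeft x = 0) :
    ∃ η : M [⋀^Fin (q + 2)]→ₗ[R] Q, ω = η.curryLeft x := by
  induction rs generalizing Q q with
  | nil =>
    refine ⟨0, (Module.finBasis R M).ext_alternating fun v hv => ?_⟩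
    have hcard := Fintype.card_le_of_injective v hv
    simp only [List.length_nil, Fintype.card_fin] at hq hcard
    omega
  | cons r rs ih =>
    obtain ⟨hr, hreg⟩ := (isWeaklyRegular_cons_iff Q r rs).1 hreg
    obtain ⟨φ, hφ⟩ := hrs r List.mem_cons_self
    let π : Q →ₗ[R] QuotSMulTop r Q := Submodule.mkQ _
    have π_eq_zero {m : Q} : π m = 0 ↔ ∃ n : Q, r • n = m := by
      simp only [π, Submodule.mkQ_apply, Submodule.Quotient.mk_eq_zero,
        Submodule.mem_smul_pointwise_iff_exists, Submodule.mem_top, true_and]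
    let h := AlternatingMap.alternatizeUncurryFin (φ.smulRight ω)
    have hh : h.curryLeft x = r • ω := by
      rw [curryLeft_alternatizeUncurryFin_smulRight φ hω, hφ]
    obtain ⟨η', hη'⟩ : ∃ η' : M [⋀^Fin (q + 3)]→ₗ[R] QuotSMulTop r Q,
        π.compAlternatingMap h = η'.curryLeft x := by
      refine ih hreg (fun s hs => hrs s (List.mem_cons_of_mem r hs)) ?_ ?_
      · rw [List.length_cons] at hq
        omega
      · rw [AlternatingMap.curryLeft_compAlternatingMap, hh]
        ext v
        exact π_eq_zero.2 ⟨ω v, rfl⟩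
    obtain ⟨η, rfl⟩ := exists_compAlternatingMap_eq π η' fun v =>
      LinearMap.mem_range.2 (Submodule.mkQ_surjective _ _)
    obtain ⟨ζ, hζ⟩ := exists_compAlternatingMap_eq (LinearMap.lsmul R Q r) (h - η.curryLeft x)
      fun v => π_eq_zero.1 (by
        rw [AlternatingMap.sub_apply, map_sub, sub_eq_zero]
        exact congrArg (· v) hη')
    refine ⟨ζ, AlternatingMap.ext fun v => hr ?_⟩
    calc r • ω v = h.curryLeft x v - (η.curryLeft x).curryLeft x v := by
          rw [hh, AlternatingMap.curryLeft_same, AlternatingMap.zero_apply, sub_zero,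
            AlternatingMap.smul_apply]
      _ = (h - η.curryLeft x).curryLeft x v := rfl
      _ = r • ζ.curryLeft x v := by rw [← hζ]; rfl

theorem exists_antisymm_of_sum_mul_eq_zero {ι : Type*} [Fintype ι] [Nontrivial R] {g : ι → R}
    {rs : List R} (hreg : IsWeaklyRegular R rs) (hrs : ∀ r ∈ rs, r ∈ Ideal.span (Set.range g))
    (hlen : Fintype.card ι ≤ rs.length) {a : ι → R} (ha : ∑ i, a i * g i = 0) :
    ∃ b : ι → ι → R, (∀ i j, b i j = -b j i) ∧ ∀ i, a i = ∑ j, b i j * g j := by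
  classical
  let toDual (c : ι → R) : Module.Dual R (ι → R) := Fintype.linearCombination R c
  let ω : (ι → R) [⋀^Fin 1]→ₗ[R] R := AlternatingMap.ofSubsingleton R (ι → R) R 0 (toDual a)
  obtain ⟨η, hη⟩ : ∃ η : (ι → R) [⋀^Fin 2]→ₗ[R] R, ω = η.curryLeft g := by
    refine exists_eq_curryLeft_of_isWeaklyRegular g hreg (fun r hr => ?_) (q := 0) (by simpa) ?_
    · obtain ⟨c, hc⟩ := Ideal.mem_span_range_iff_exists_fun.1 (hrs r hr)
      exact ⟨toDual c, by simpa [toDual, Fintype.linearCombination_apply, mul_comm] using hc⟩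
    · ext v
      simpa [ω, toDual, Fintype.linearCombination_apply, mul_comm] using ha
  refine ⟨fun i j => η ![Pi.single j 1, Pi.single i 1], fun i j => ?_, fun i => ?_⟩
  · have hswap : (![Pi.single j 1, Pi.single i 1] : Fin 2 → ι → R) =
        ![Pi.single i 1, Pi.single j 1] ∘ Equiv.swap 0 1 := by
      funext k
      fin_cases k <;> simp
    simp only [hswap, η.map_swap _ Fin.zero_ne_one]
  · let L : Module.Dual R (ι → R) :=
      { toFun := fun y => η.curryLeft y ![Pi.single i 1]
        map_add' := fun _ _ => by rw [map_add, AlternatingMap.add_apply]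
        map_smul' := fun _ _ => by rw [map_smul, AlternatingMap.smul_apply, RingHom.id_apply] }
    calc a i = ω ![Pi.single i 1] := by
          simp [ω, toDual, Fintype.linearCombination_apply_single]
      _ = L g := by rw [hη]; rfl
      _ = ∑ j, g j • L (Pi.single j 1) := by
          conv_lhs => rw [pi_eq_sum_univ' g]
          simp only [map_sum, map_smul]
      _ = ∑ j, η ![Pi.single j 1, Pi.single i 1] * g j :=
          Finset.sum_congr rfl fun j _ => mul_comm _ _

end Koszul

section PurePowers

open RingTheory.Sequence

variable {σ R : Type*} [CommRing R]

theorem mem_span_X_pow_of_X_pow_mul_mem {S : Set σ} {i : σ} (hi : i ∉ S) {M : ℕ}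
    {P : MvPolynomial σ R}
    (hP : X i ^ M * P ∈ Ideal.span ((fun j => (X j : MvPolynomial σ R) ^ M) '' S)) :
    P ∈ Ideal.span ((fun j => (X j : MvPolynomial σ R) ^ M) '' S) := by
  have hspan : (fun j => (X j : MvPolynomial σ R) ^ M) '' S =
      (fun s => monomial s 1) '' ((fun j => Finsupp.single j M) '' S) := by
    simp only [Set.image_image, X_pow_eq_monomial]
  rw [hspan, mem_ideal_span_monomial_image] at hP ⊢
  intro s hs
  obtain ⟨_, ⟨j, hj, rfl⟩, hle⟩ := hP (Finsupp.single i M + s) (by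
    rwa [mem_support_iff, X_pow_eq_monomial, coeff_monomial_mul, one_mul, ← mem_support_iff])
  refine ⟨_, Set.mem_image_of_mem _ hj, ?_⟩
  rw [Finsupp.single_le_iff] at hle ⊢
  rwa [Finsupp.add_apply, Finsupp.single_eq_of_ne (by rintro rfl; exact hi hj), zero_add] at hle

theorem isWeaklyRegular_map_X_pow {l : List σ} (hl : l.Nodup) (M : ℕ) :
    IsWeaklyRegular (MvPolynomial σ R) (l.map fun i => (X i : MvPolynomial σ R) ^ M) := by
  refine ⟨fun k hk => ?_⟩
  have hprev : (Ideal.ofList ((l.map fun i => (X i : MvPolynomial σ R) ^ M).take k) •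
      (⊤ : Ideal (MvPolynomial σ R))) =
      Ideal.span ((fun j => (X j : MvPolynomial σ R) ^ M) '' {j | j ∈ l.take k}) := by
    rw [smul_eq_mul, Ideal.mul_top, Ideal.ofList, ← List.map_take]
    congr 1
    ext P
    simp only [Set.mem_ofPred_eq, Set.mem_image, List.mem_map]
  rw [hprev, isSMulRegular_quotient_iff_mem_of_smul_mem]
  intro P hP
  rw [List.length_map] at hk
  rw [List.getElem_map, smul_eq_mul] at hP
  refine mem_span_X_pow_of_X_pow_mul_mem (fun hmem => ?_) hP
  obtain ⟨m, hm, heq⟩ := List.mem_take_iff_getElem.1 hmem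
  rw [hl.getElem_inj_iff] at heq
  omega

theorem exists_antisymm_of_X_pow_mem_span [Fintype σ] [Nontrivial R] {g : σ → MvPolynomial σ R}
    {M : ℕ} (hM : ∀ i, X i ^ M ∈ Ideal.span (Set.range g)) {a : σ → MvPolynomial σ R}
    (ha : ∑ i, a i * g i = 0) :
    ∃ b : σ → σ → MvPolynomial σ R, (∀ i j, b i j = -b j i) ∧ ∀ i, a i = ∑ j, b i j * g j := by
  refine exists_antisymm_of_sum_mul_eq_zero
    (isWeaklyRegular_map_X_pow (Finset.nodup_toList Finset.univ) M) ?_ ?_ ha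
  · simpa using hM
  · simp

end PurePowers

section WeightFiltration

variable {σ R : Type*} [CommRing R]

variable (R) in
/-- The polynomials all of whose monomials have weight at most `m`. The weights are integers so
that the weight of a partial derivative can be written as a difference. -/
noncomputable def weightFiltration (w : σ → ℤ) (m : ℤ) : Submodule R (MvPolynomial σ R) :=
  restrictSupport R {s | Finsupp.weight w s ≤ m}

variable {w : σ → ℤ} {m n : ℤ} {P Q : MvPolynomial σ R}

theorem mem_weightFiltration :
    P ∈ weightFiltration R w m ↔ ∀ s, coeff s P ≠ 0 → Finsupp.weight w s ≤ m := by
  simp [weightFiltration, mem_restrictSupport_iff, Set.subset_def]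

theorem weightFiltration_mono : Monotone (weightFiltration R w) := fun _ _ hmn =>
  restrictSupport_mono R fun _ hs => le_trans hs hmn

theorem mem_weightFiltration_of_le (hP : P ∈ weightFiltration R w m) (hmn : m ≤ n) :
    P ∈ weightFiltration R w n :=
  weightFiltration_mono hmn hP

theorem mem_weightFiltration_of_isWeightedHomogeneous (hP : IsWeightedHomogeneous w P m) :
    P ∈ weightFiltration R w m :=
  mem_weightFiltration.2 fun _ hs => (hP hs).le

theorem mul_mem_weightFiltration (hP : P ∈ weightFiltration R w m)
    (hQ : Q ∈ weightFiltration R w n) : P * Q ∈ weightFiltration R w (m + n) := by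
  classical
  refine mem_weightFiltration.2 fun s hs => ?_
  rw [coeff_mul] at hs
  obtain ⟨⟨s₁, s₂⟩, hs₁₂, hne⟩ := Finset.exists_ne_zero_of_sum_ne_zero hs
  rw [← Finset.HasAntidiagonal.mem_antidiagonal.1 hs₁₂, map_add]
  exact add_le_add (mem_weightFiltration.1 hP _ (left_ne_zero_of_mul hne))
    (mem_weightFiltration.1 hQ _ (right_ne_zero_of_mul hne))

theorem pow_mul_mem_weightFiltration (hP : P ∈ weightFiltration R w m)
    (hQ : Q ∈ weightFiltration R w n) (j : ℕ) :
    P ^ j * Q ∈ weightFiltration R w (n + j * m) := by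
  induction j with
  | zero => simpa using hQ
  | succ j ih =>
    rw [pow_succ', mul_assoc, Nat.cast_succ, show n + (j + 1) * m = m + (n + j * m) by ring]
    exact mul_mem_weightFiltration hP ih

theorem pderiv_mem_weightFiltration (hP : P ∈ weightFiltration R w m) (i : σ) :
    pderiv i P ∈ weightFiltration R w (m - w i) := by
  refine mem_weightFiltration.2 fun s hs => ?_
  rw [coeff_pderiv] at hs
  have := mem_weightFiltration.1 hP _ (left_ne_zero_of_mul hs)
  rw [map_add, Finsupp.weight_single, one_smul] at this
  linarith

theorem eq_zero_of_mem_weightFiltration (hw : ∀ i, 0 ≤ w i) (hP : P ∈ weightFiltration R w m)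
    (hm : m < 0) : P = 0 := by
  ext s
  by_contra hs
  have hle := mem_weightFiltration.1 hP s hs
  have hnonneg : 0 ≤ Finsupp.weight w s :=
    Finset.sum_nonneg fun i _ => smul_nonneg (Nat.zero_le _) (hw i)
  linarith

theorem exists_mem_weightFiltration (w : σ → ℤ) (P : MvPolynomial σ R) :
    ∃ m, P ∈ weightFiltration R w m := by
  obtain ⟨m, hm⟩ := (P.support.image (Finsupp.weight w)).bddAbove
  exact ⟨m, mem_weightFiltration.2 fun s hs =>
    hm (Finset.mem_coe.2 (Finset.mem_image_of_mem _ (mem_support_iff.2 hs)))⟩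

theorem weight_natCast (α : σ → ℕ) (s : σ →₀ ℕ) :
    Finsupp.weight (fun i => (α i : ℤ)) s = (Finsupp.weight α s : ℤ) := by
  simp [Finsupp.weight_apply, Finsupp.sum]

theorem sub_weightedHomogeneousComponent_mem (hP : P ∈ weightFiltration R w m) :
    P - weightedHomogeneousComponent w m P ∈ weightFiltration R w (m - 1) := by
  classical
  refine mem_weightFiltration.2 fun s hs => ?_
  rw [coeff_sub, coeff_weightedHomogeneousComponent] at hs
  split_ifs at hs with hsm
  · exact absurd (sub_self _) hs
  · rw [sub_zero] at hs
    exact Int.le_sub_one_of_lt (lt_of_le_of_ne (mem_weightFiltration.1 hP s hs) hsm)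

theorem weightedHomogeneousComponent_eq_zero_of_mem (hP : P ∈ weightFiltration R w m)
    (hmn : m < n) : weightedHomogeneousComponent w n P = 0 :=
  weightedHomogeneousComponent_eq_zero' n P fun _ hs =>
    ((mem_weightFiltration.1 hP _ (mem_support_iff.1 hs)).trans_lt hmn).ne

theorem weightedHomogeneousComponent_mem_restrictSupport {S : Set (σ →₀ ℕ)}
    (hP : P ∈ restrictSupport R S) (m : ℤ) :
    weightedHomogeneousComponent w m P ∈ restrictSupport R S := by
  classical
  rw [mem_restrictSupport_iff, support_weightedHomogeneousComponent] at *
  exact (Finset.coe_subset.2 (Finset.filter_subset _ _)).trans hP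

theorem weightedHomogeneousComponent_mul (hQ : IsWeightedHomogeneous w Q n) (k : ℤ) :
    weightedHomogeneousComponent w k (P * Q) = weightedHomogeneousComponent w (k - n) P * Q := by
  induction P using MvPolynomial.induction_on' with
  | monomial s c =>
    have hs := isWeightedHomogeneous_monomial w s c rfl
    obtain rfl | hk := eq_or_ne k (Finsupp.weight w s + n)
    · rw [(hs.mul hQ).weightedHomogeneousComponent_same, add_sub_cancel_right,
        hs.weightedHomogeneousComponent_same]
    · rw [(hs.mul hQ).weightedHomogeneousComponent_ne _ hk,
        hs.weightedHomogeneousComponent_ne _ (by omega), zero_mul]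
  | add P₁ P₂ h₁ h₂ => rw [add_mul, map_add, h₁, h₂, map_add, add_mul]

theorem weightFiltration_le_of_isWeightedHomogeneous (hw : ∀ i, 0 ≤ w i)
    {L : ℤ → Submodule R (MvPolynomial σ R)} (hL : Monotone L)
    (h : ∀ m, (∀ k < m, weightFiltration R w k ≤ L k) →
      ∀ P, IsWeightedHomogeneous w P m → P ∈ L m) (m : ℤ) :
    weightFiltration R w m ≤ L m := by
  suffices ∀ (b : ℕ) (m : ℤ), m < b → weightFiltration R w m ≤ L m from
    this (m.toNat + 1) m (by omega)
  intro b
  induction b with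
  | zero =>
    intro m hm P hP
    rw [eq_zero_of_mem_weightFiltration hw hP hm]
    exact zero_mem _
  | succ b ih =>
    intro m hm P hP
    rw [← add_sub_cancel (weightedHomogeneousComponent w m P) P]
    refine add_mem (h m (fun k hk => ih k (by omega)) _
      (weightedHomogeneousComponent_isWeightedHomogeneous m P)) ?_
    exact hL (by omega) (ih (m - 1) (by omega) (sub_weightedHomogeneousComponent_mem hP))

theorem coeff_X_mul_pderiv (i : σ) (P : MvPolynomial σ R) (s : σ →₀ ℕ) :
    coeff s (X i * pderiv i P) = s i * coeff s P := by
  classical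
  induction P using MvPolynomial.induction_on' with
  | monomial t c =>
    rw [X_mul_pderiv_monomial, coeff_smul, nsmul_eq_mul, coeff_monomial]
    split_ifs with h <;> simp [h]
  | add P Q hP hQ => rw [map_add, mul_add, coeff_add, hP, hQ, coeff_add, mul_add]

variable [Fintype σ]

theorem sum_zsmul_X_mul_pderiv (hP : IsWeightedHomogeneous w P m) :
    ∑ i, w i • (X i * pderiv i P) = m • P := by
  ext s
  rw [coeff_sum]
  simp only [coeff_smul, coeff_X_mul_pderiv]
  by_cases hs : coeff s P = 0
  · simp [hs]
  · rw [← hP hs, Finsupp.weight_eq_sum]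
    simp [Finset.sum_mul, mul_assoc, mul_left_comm]

theorem sum_pderiv_zsmul_X_mul (hP : IsWeightedHomogeneous w P m) :
    ∑ i, pderiv i (w i • (X i * P)) = (∑ i, w i + m) • P := by
  have (i : σ) : pderiv i (w i • (X i * P)) = w i • P + w i • (X i * pderiv i P) := by
    rw [map_zsmul, pderiv_mul, pderiv_X_self, one_mul, smul_add]
  simp only [this, Finset.sum_add_distrib, sum_zsmul_X_mul_pderiv hP, add_smul, Finset.sum_smul]

end WeightFiltration

section TwistedDeriv

variable {σ R : Type*} [CommRing R]

theorem pderiv_pderiv_comm (i j : σ) (P : MvPolynomial σ R) :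
    pderiv i (pderiv j P) = pderiv j (pderiv i P) := by
  classical
  have h : ⁅pderiv (R := R) i, pderiv j⁆ = 0 := derivation_ext fun k => by
    rw [Derivation.commutator_apply, pderiv_X, pderiv_X, Pi.single_apply, Pi.single_apply]
    split_ifs <;> simp
  rw [← sub_eq_zero, ← Derivation.commutator_apply, h, Derivation.zero_apply]

/-- The operator `P ↦ (∂f/∂xᵢ) P - u (∂P/∂xᵢ)`, which is `-u ∂/∂xᵢ` conjugated by `exp (f / u)`
when `u` is invertible. -/
noncomputable def twistedDeriv (f : MvPolynomial σ R) (u : R) (i : σ) :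
    MvPolynomial σ R →ₗ[R] MvPolynomial σ R :=
  LinearMap.mulLeft R (pderiv i f) - u • (pderiv i).toLinearMap

theorem twistedDeriv_apply (f : MvPolynomial σ R) (u : R) (i : σ) (P : MvPolynomial σ R) :
    twistedDeriv f u i P = pderiv i f * P - u • pderiv i P := rfl

theorem twistedDeriv_comm (f : MvPolynomial σ R) (u : R) (i j : σ) (P : MvPolynomial σ R) :
    twistedDeriv f u i (twistedDeriv f u j P) = twistedDeriv f u j (twistedDeriv f u i P) := by
  simp only [twistedDeriv_apply, map_sub, smul_eq_C_mul, pderiv_mul, pderiv_C, zero_mul, zero_add,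
    pderiv_pderiv_comm i j]
  ring

variable [Fintype σ]

/-- The sum of the ranges of the operators `twistedDeriv f u i`. For `u = 0` it is the Jacobian
ideal of `f`. -/
noncomputable def twistedImage (f : MvPolynomial σ R) (u : R) : Submodule R (MvPolynomial σ R) :=
  LinearMap.range (∑ i, twistedDeriv f u i ∘ₗ LinearMap.proj i)

theorem mem_twistedImage {f : MvPolynomial σ R} {u : R} {P : MvPolynomial σ R} :
    P ∈ twistedImage f u ↔ ∃ a : σ → MvPolynomial σ R, ∑ i, twistedDeriv f u i (a i) = P := by
  simp [twistedImage]

theorem twistedDeriv_mem_twistedImage (f : MvPolynomial σ R) (u : R)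
    (i : σ) (P : MvPolynomial σ R) :
    twistedDeriv f u i P ∈ twistedImage f u := by
  classical
  refine mem_twistedImage.2 ⟨Pi.single i P, ?_⟩
  rw [Finset.sum_eq_single_of_mem i (Finset.mem_univ i), Pi.single_eq_same]
  intro j _ hj
  rw [Pi.single_eq_of_ne hj, map_zero]

theorem sum_twistedDeriv_eq_zero_of_antisymm [CharZero R] [NoZeroDivisors R]
    (f : MvPolynomial σ R) (u : R) {b : σ → σ → MvPolynomial σ R} (hb : ∀ i j, b i j = -b j i) :
    ∑ i, ∑ j, twistedDeriv f u i (twistedDeriv f u j (b i j)) = 0 := by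
  rw [← self_eq_neg, ← Finset.sum_neg_distrib]
  conv_lhs => rw [Finset.sum_comm]
  refine Finset.sum_congr rfl fun j _ => ?_
  rw [← Finset.sum_neg_distrib]
  refine Finset.sum_congr rfl fun i _ => ?_
  rw [hb i j, map_neg, map_neg, twistedDeriv_comm]

end TwistedDeriv

section Tame

variable {σ R : Type*} [CommRing R]

/-- The ideal generated by the partial derivatives of `g`. -/
noncomputable def jacobianIdeal (g : MvPolynomial σ R) : Ideal (MvPolynomial σ R) :=
  Ideal.span (Set.range fun i => pderiv i g)

theorem isCompl_restrictSupport_of_basis_quotient {𝔞 : Ideal (MvPolynomial σ R)}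
    {S : Set (σ →₀ ℕ)}
    (hli : LinearIndependent R fun β : S => Ideal.Quotient.mk 𝔞 (monomial (β : σ →₀ ℕ) 1))
    (hspan : Submodule.span R
      (Set.range fun β : S => Ideal.Quotient.mk 𝔞 (monomial (β : σ →₀ ℕ) 1)) = ⊤) :
    IsCompl (restrictSupport R S) (𝔞.restrictScalars R) := by
  let π : MvPolynomial σ R →ₗ[R] MvPolynomial σ R ⧸ 𝔞 := (Ideal.Quotient.mkₐ R 𝔞).toLinearMap
  have hker : LinearMap.ker π = 𝔞.restrictScalars R := by
    ext P
    exact Ideal.Quotient.eq_zero_iff_mem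
  have hrange : LinearMap.range π = ⊤ := LinearMap.range_eq_top.2 Ideal.Quotient.mk_surjective
  rw [restrictSupport_eq_span, Set.image_eq_range, ← hker]
  refine ⟨Submodule.range_ker_disjoint hli, codisjoint_iff.2 ?_⟩
  rw [← LinearMap.map_eq_top_iff hrange, Submodule.map_span, ← Set.range_comp]
  exact hspan

/-- `f` is strongly tame for the positive weights `w` with leading form `g` of weight `d`, and the
monomials with exponents in `I` form a basis of the Milnor algebra of `g`; the latter is expressed
by saying that their span is a complement of the Jacobian ideal. Finiteness of `I` stands for the
condition that the origin is the only common zero of the partial derivatives of `g`. -/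
structure IsTame (w : σ → ℤ) (f g : MvPolynomial σ R) (d : ℤ) (I : Finset (σ →₀ ℕ)) : Prop where
  weight_pos : ∀ i, 0 < w i
  isWeightedHomogeneous : IsWeightedHomogeneous w g d
  sub_mem : f - g ∈ weightFiltration R w (d - 1)
  isCompl : IsCompl (restrictSupport R (I : Set (σ →₀ ℕ)))
    ((jacobianIdeal g).restrictScalars R)

namespace IsTame

variable {w : σ → ℤ} {f g : MvPolynomial σ R} {d : ℤ} {I : Finset (σ →₀ ℕ)}

theorem of_weightedTotalDegree_eq {α : σ → ℕ} (hα : ∀ i, 0 < α i) {d : ℕ}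
    (hd : weightedTotalDegree α f = d) (hg : g = weightedHomogeneousComponent α d f)
    (hI : IsCompl (restrictSupport R (I : Set (σ →₀ ℕ))) ((jacobianIdeal g).restrictScalars R)) :
    IsTame (fun i => (α i : ℤ)) f g d I where
  weight_pos i := Int.natCast_pos.2 (hα i)
  isWeightedHomogeneous s hs := by
    rw [weight_natCast]
    rw [hg] at hs
    exact_mod_cast weightedHomogeneousComponent_isWeightedHomogeneous d f hs
  sub_mem := by
    classical
    refine mem_weightFiltration.2 fun s hs => ?_
    rw [hg, coeff_sub, coeff_weightedHomogeneousComponent] at hs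
    split_ifs at hs with hsd
    · exact absurd (sub_self _) hs
    · rw [sub_zero] at hs
      have := le_weightedTotalDegree α (mem_support_iff.2 hs)
      rw [weight_natCast]
      omega
  isCompl := hI

protected theorem mem_weightFiltration (h : IsTame w f g d I) : f ∈ weightFiltration R w d := by
  rw [← sub_add_cancel f g]
  exact add_mem (mem_weightFiltration_of_le h.sub_mem (sub_one_lt d).le)
    (mem_weightFiltration_of_isWeightedHomogeneous h.isWeightedHomogeneous)

theorem isWeightedHomogeneous_pderiv (h : IsTame w f g d I) (i : σ) :
    IsWeightedHomogeneous w (pderiv i g) (d - w i) :=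
  h.isWeightedHomogeneous.pderiv (sub_add_cancel d (w i))

theorem eq_zero_of_mem_jacobianIdeal (h : IsTame w f g d I) {P : MvPolynomial σ R}
    (hPI : P ∈ restrictSupport R (I : Set (σ →₀ ℕ))) (hP : P ∈ jacobianIdeal g) : P = 0 :=
  Submodule.disjoint_def.1 h.isCompl.disjoint P hPI hP

theorem leadingWeight_pos [Nontrivial R] [Nonempty σ] (h : IsTame w f g d I) : 0 < d := by
  obtain ⟨i, hi⟩ : ∃ i, pderiv i g ≠ 0 := by
    by_contra! hg
    have hbot : jacobianIdeal g = ⊥ := by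
      rw [jacobianIdeal, Ideal.span_eq_bot]
      rintro _ ⟨i, rfl⟩
      exact hg i
    have htop := h.isCompl.codisjoint.eq_top
    rw [hbot, Submodule.restrictScalars_bot, sup_bot_eq] at htop
    refine Set.infinite_univ (α := σ →₀ ℕ) (I.finite_toSet.subset fun s _ => ?_)
    have hs : monomial s (1 : R) ∈ restrictSupport R (I : Set (σ →₀ ℕ)) := htop ▸ trivial
    exact ((monomial_mem_restrictSupport R).1 hs).resolve_right one_ne_zero
  have hdi : 0 ≤ d - w i := not_lt.1 fun hlt => hi
    (eq_zero_of_mem_weightFiltration (fun j => (h.weight_pos j).le)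
      (mem_weightFiltration_of_isWeightedHomogeneous (h.isWeightedHomogeneous_pderiv i)) hlt)
  linarith [h.weight_pos i]

theorem twistedDeriv_sub_mem [Nontrivial R] (h : IsTame w f g d I) (u : R) (i : σ) {n : ℤ}
    {P : MvPolynomial σ R} (hP : P ∈ weightFiltration R w n) :
    twistedDeriv f u i P - P * pderiv i g ∈ weightFiltration R w (n + d - w i - 1) := by
  have : Nonempty σ := ⟨i⟩
  have hd := h.leadingWeight_pos
  have heq : twistedDeriv f u i P - P * pderiv i g =
      P * pderiv i (f - g) - u • pderiv i P := by
    rw [twistedDeriv_apply, map_sub]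
    ring
  rw [heq]
  refine Submodule.sub_mem _ ?_ (Submodule.smul_mem _ u ?_)
  · exact mem_weightFiltration_of_le
      (mul_mem_weightFiltration hP (pderiv_mem_weightFiltration h.sub_mem i)) (by linarith)
  · exact mem_weightFiltration_of_le (pderiv_mem_weightFiltration hP i) (by omega)

theorem exists_isWeightedHomogeneous_decomposition [Fintype σ] (h : IsTame w f g d I) {m : ℤ}
    {P : MvPolynomial σ R} (hP : IsWeightedHomogeneous w P m) :
    ∃ v ∈ restrictSupport R (I : Set (σ →₀ ℕ)), IsWeightedHomogeneous w v m ∧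
      ∃ a : σ → MvPolynomial σ R, (∀ i, IsWeightedHomogeneous w (a i) (m - (d - w i))) ∧
        P = v + ∑ i, a i * pderiv i g := by
  obtain ⟨v, hv, q, hq, hP_eq⟩ :=
    Submodule.mem_sup.1 (h.isCompl.codisjoint.eq_top.ge (Submodule.mem_top (x := P)))
  obtain ⟨a, ha⟩ := Ideal.mem_span_range_iff_exists_fun.1 hq
  refine ⟨weightedHomogeneousComponent w m v,
    weightedHomogeneousComponent_mem_restrictSupport hv m,
    weightedHomogeneousComponent_isWeightedHomogeneous m v,
    fun i => weightedHomogeneousComponent w (m - (d - w i)) (a i),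
    fun i => weightedHomogeneousComponent_isWeightedHomogeneous _ _, ?_⟩
  calc P = weightedHomogeneousComponent w m (v + ∑ i, a i * pderiv i g) := by
        rw [ha, hP_eq, hP.weightedHomogeneousComponent_same]
    _ = _ := by
        simp only [map_add, map_sum, fun i =>
          weightedHomogeneousComponent_mul (P := a i) (h.isWeightedHomogeneous_pderiv i) m]

theorem exists_X_pow_mem_jacobianIdeal [Finite σ] (h : IsTame w f g d I) :
    ∃ M : ℕ, ∀ i, (X i : MvPolynomial σ R) ^ M ∈ jacobianIdeal g := by
  cases nonempty_fintype σ
  obtain ⟨M, hM⟩ : ∃ M : ℕ, ∀ s ∈ I, Finsupp.weight w s < M := by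
    obtain ⟨m, hm⟩ := (I.image (Finsupp.weight w)).bddAbove
    refine ⟨m.toNat + 1, fun s hs => ?_⟩
    have := hm (Finset.mem_coe.2 (Finset.mem_image_of_mem _ hs))
    omega
  refine ⟨M, fun i => ?_⟩
  obtain ⟨v, hvI, hv, a, -, hXM⟩ := h.exists_isWeightedHomogeneous_decomposition
    ((isWeightedHomogeneous_X R w i).pow M)
  have hv0 : v = 0 := by
    ext s
    by_contra hs
    have hlt := hM s ((mem_restrictSupport_iff R).1 hvI (mem_support_iff.2 hs))
    rw [hv hs, nsmul_eq_mul] at hlt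
    nlinarith [h.weight_pos i]
  rw [hXM, hv0, zero_add]
  exact Ideal.mem_span_range_iff_exists_fun.2 ⟨a, rfl⟩

variable [Fintype σ]

theorem exists_isWeightedHomogeneous_antisymm [Nontrivial R] (h : IsTame w f g d I) {n : ℤ}
    {a : σ → MvPolynomial σ R} (ha : ∀ i, IsWeightedHomogeneous w (a i) (n + w i))
    (ha0 : ∑ i, a i * pderiv i g = 0) :
    ∃ b : σ → σ → MvPolynomial σ R, (∀ i j, b i j = -b j i) ∧
      (∀ i j, IsWeightedHomogeneous w (b i j) (n + w i - (d - w j))) ∧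
      ∀ i, a i = ∑ j, b i j * pderiv j g := by
  obtain ⟨M, hM⟩ := h.exists_X_pow_mem_jacobianIdeal
  obtain ⟨b, hb, hab⟩ := exists_antisymm_of_X_pow_mem_span hM ha0
  refine ⟨fun i j => weightedHomogeneousComponent w (n + w i - (d - w j)) (b i j),
    fun i j => ?_, fun i j => weightedHomogeneousComponent_isWeightedHomogeneous _ _, fun i => ?_⟩
  · simp only [hb i j, map_neg]
    congr 3
    ring
  · calc a i = weightedHomogeneousComponent w (n + w i) (∑ j, b i j * pderiv j g) := by
          rw [← hab, (ha i).weightedHomogeneousComponent_same]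
      _ = _ := by
          simp only [map_sum, fun j =>
            weightedHomogeneousComponent_mul (P := b i j) (h.isWeightedHomogeneous_pderiv j)]

theorem weightedHomogeneousComponent_sum_twistedDeriv [Nontrivial R] (h : IsTame w f g d I) (u : R)
    {n : ℤ} {a : σ → MvPolynomial σ R} (ha : ∀ i, a i ∈ weightFiltration R w (n - (d - w i))) :
    weightedHomogeneousComponent w n (∑ i, twistedDeriv f u i (a i)) =
      ∑ i, weightedHomogeneousComponent w (n - (d - w i)) (a i) * pderiv i g := by
  rw [map_sum]
  refine Finset.sum_congr rfl fun i _ => ?_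
  have hlow : weightedHomogeneousComponent w n (twistedDeriv f u i (a i) - a i * pderiv i g) = 0 :=
    weightedHomogeneousComponent_eq_zero_of_mem (h.twistedDeriv_sub_mem u i (ha i)) (by linarith)
  rw [← weightedHomogeneousComponent_mul (h.isWeightedHomogeneous_pderiv i), ← sub_eq_zero,
    ← map_sub, hlow]

variable [CharZero R] [IsDomain R]

theorem exists_sum_twistedDeriv_eq_of_mem (h : IsTame w f g d I) (u : R) {n : ℤ}
    {a : σ → MvPolynomial σ R} (ha : ∀ i, a i ∈ weightFiltration R w (n - (d - w i)))
    (hsum : ∑ i, twistedDeriv f u i (a i) ∈ weightFiltration R w (n - 1)) :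
    ∃ a' : σ → MvPolynomial σ R, (∀ i, a' i ∈ weightFiltration R w (n - 1 - (d - w i))) ∧
      ∑ i, twistedDeriv f u i (a' i) = ∑ i, twistedDeriv f u i (a i) := by
  let top (i : σ) := weightedHomogeneousComponent w (n - (d - w i)) (a i)
  have htop : ∑ i, top i * pderiv i g = 0 := by
    rw [← h.weightedHomogeneousComponent_sum_twistedDeriv u ha]
    exact weightedHomogeneousComponent_eq_zero_of_mem hsum (sub_one_lt n)
  have htop_hom (i : σ) : IsWeightedHomogeneous w (top i) (n - d + w i) := by
    rw [sub_add]
    exact weightedHomogeneousComponent_isWeightedHomogeneous _ _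
  obtain ⟨b, hb, hb_hom, htop_eq⟩ := h.exists_isWeightedHomogeneous_antisymm htop_hom htop
  -- The correction does not change the sum: the operators commute and `b` is antisymmetric.
  refine ⟨fun i => a i - ∑ j, twistedDeriv f u j (b i j), fun i => ?_, ?_⟩
  · have heq : a i - ∑ j, twistedDeriv f u j (b i j) =
        (a i - top i) - ∑ j, (twistedDeriv f u j (b i j) - b i j * pderiv j g) := by
      rw [Finset.sum_sub_distrib, ← htop_eq i]
      ring
    beta_reduce
    rw [heq]
    refine Submodule.sub_mem _ ?_ (Submodule.sum_mem _ fun j _ => ?_)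
    · exact mem_weightFiltration_of_le (sub_weightedHomogeneousComponent_mem (ha i)) (by linarith)
    · exact mem_weightFiltration_of_le (h.twistedDeriv_sub_mem u j
        (mem_weightFiltration_of_isWeightedHomogeneous (hb_hom i j))) (by linarith)
  · simp only [map_sub, map_sum, Finset.sum_sub_distrib,
      sum_twistedDeriv_eq_zero_of_antisymm f u hb, sub_zero]

theorem weightedHomogeneousComponent_mem_jacobianIdeal (h : IsTame w f g d I) (u : R) {m : ℤ}
    {P : MvPolynomial σ R} (hP : P ∈ weightFiltration R w m) (hPu : P ∈ twistedImage f u) :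
    weightedHomogeneousComponent w m P ∈ jacobianIdeal g := by
  suffices ∀ (k : ℕ) (a : σ → MvPolynomial σ R),
      (∀ i, a i ∈ weightFiltration R w (m + k - (d - w i))) →
      ∑ i, twistedDeriv f u i (a i) = P → weightedHomogeneousComponent w m P ∈ jacobianIdeal g by
    obtain ⟨a, ha⟩ := mem_twistedImage.1 hPu
    choose e he using fun i => exists_mem_weightFiltration w (a i)
    obtain ⟨k, hk⟩ : ∃ k : ℕ, ∀ i, e i ≤ m + k - (d - w i) := by
      obtain ⟨k, hk⟩ := (Set.finite_range fun i => e i - m + (d - w i)).bddAbove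
      refine ⟨k.toNat, fun i => ?_⟩
      have := hk (Set.mem_range_self i)
      omega
    exact this k a (fun i => mem_weightFiltration_of_le (he i) (hk i)) ha
  intro k
  induction k with
  | zero =>
    intro a ha hsum
    simp only [Nat.cast_zero, add_zero] at ha
    rw [← hsum, h.weightedHomogeneousComponent_sum_twistedDeriv u ha]
    exact Ideal.mem_span_range_iff_exists_fun.2 ⟨_, rfl⟩
  | succ k ih =>
    intro a ha hsum
    obtain ⟨a', ha', hsum'⟩ := h.exists_sum_twistedDeriv_eq_of_mem u ha
      (hsum ▸ mem_weightFiltration_of_le hP (by push_cast; linarith))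
    refine ih a' (fun i => mem_weightFiltration_of_le (ha' i) ?_) (hsum'.trans hsum)
    push_cast
    linarith

theorem eq_zero_of_mem_twistedImage (h : IsTame w f g d I) {u : R} {P : MvPolynomial σ R}
    (hPI : P ∈ restrictSupport R (I : Set (σ →₀ ℕ))) (hPu : P ∈ twistedImage f u) : P = 0 := by
  obtain ⟨m, hm⟩ := exists_mem_weightFiltration w P
  suffices ∀ k ≤ m, P ∈ weightFiltration R w k from
    eq_zero_of_mem_weightFiltration (fun i => (h.weight_pos i).le)
      (this (min m (-1)) (min_le_left _ _)) (by omega)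
  refine Int.leInductionDown hm fun k _ hk => ?_
  have hcomp : weightedHomogeneousComponent w k P = 0 :=
    h.eq_zero_of_mem_jacobianIdeal (weightedHomogeneousComponent_mem_restrictSupport hPI k)
      (h.weightedHomogeneousComponent_mem_jacobianIdeal u hk hPu)
  simpa [hcomp] using sub_weightedHomogeneousComponent_mem hk

end IsTame

end Tame

section Families

variable {σ R : Type*} [CommRing R]

/-- The polynomials in a parameter `u` with coefficients in `R[x]` whose value at each `u` in `R`
lies in `twistedImage f u`; `Polynomial.X` stands for `u`. -/
noncomputable def twistedFamilies [Fintype σ] (f : MvPolynomial σ R) :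
    Submodule R (Polynomial (MvPolynomial σ R)) where
  carrier := {V | ∀ u : R, V.eval (C u) ∈ twistedImage f u}
  add_mem' hV hW u := by
    rw [Polynomial.eval_add]
    exact add_mem (hV u) (hW u)
  zero_mem' u := by
    rw [Polynomial.eval_zero]
    exact zero_mem _
  smul_mem' c V hV u := by
    rw [Polynomial.eval_smul]
    exact Submodule.smul_mem _ c (hV u)

/-- The polynomials in a parameter `u` of weight `d` that have weight at most `m` and whose
coefficients are combinations of the monomials with exponents in `I`. -/
noncomputable def normalForms (w : σ → ℤ) (d : ℤ) (I : Finset (σ →₀ ℕ)) (m : ℤ) :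
    Submodule R (Polynomial (MvPolynomial σ R)) where
  carrier := {V | ∀ j : ℕ, V.coeff j ∈ restrictSupport R (I : Set (σ →₀ ℕ)) ⊓
    weightFiltration R w (m - j * d)}
  add_mem' hV hW j := by
    rw [Polynomial.coeff_add]
    exact add_mem (hV j) (hW j)
  zero_mem' j := by
    rw [Polynomial.coeff_zero]
    exact zero_mem _
  smul_mem' c V hV j := by
    rw [Polynomial.coeff_smul]
    exact Submodule.smul_mem _ c (hV j)

/-- The polynomials in `u` that agree modulo `twistedFamilies f` with a normal form of weight at
most `m`. -/
noncomputable def reducibleFamilies [Fintype σ] (w : σ → ℤ) (f : MvPolynomial σ R) (d : ℤ)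
    (I : Finset (σ →₀ ℕ)) (m : ℤ) : Submodule R (Polynomial (MvPolynomial σ R)) :=
  normalForms w d I m ⊔ twistedFamilies f

variable {w : σ → ℤ} {f : MvPolynomial σ R} {d m : ℤ} {I : Finset (σ →₀ ℕ)}
  {V : Polynomial (MvPolynomial σ R)}

theorem normalForms_mono : Monotone (normalForms (R := R) w d I) := fun _ _ hmn _ hV j =>
  ⟨(hV j).1, mem_weightFiltration_of_le (hV j).2 (by linarith)⟩

theorem X_mul_mem_normalForms (hV : V ∈ normalForms w d I m) :
    Polynomial.X * V ∈ normalForms w d I (m + d) := by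
  rintro (_ | j)
  · rw [Polynomial.coeff_X_mul_zero]
    exact zero_mem _
  · rw [Polynomial.coeff_X_mul, Nat.cast_succ, show m + d - (j + 1) * d = m - j * d by ring]
    exact hV j

theorem C_mem_normalForms {P : MvPolynomial σ R}
    (hPI : P ∈ restrictSupport R (I : Set (σ →₀ ℕ))) (hP : P ∈ weightFiltration R w m) :
    Polynomial.C P ∈ normalForms w d I m := by
  rintro (_ | j)
  · simpa using ⟨hPI, hP⟩
  · rw [Polynomial.coeff_C_succ]
    exact zero_mem _

variable [Fintype σ]

theorem X_mul_mem_twistedFamilies (hV : V ∈ twistedFamilies f) :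
    Polynomial.X * V ∈ twistedFamilies f := fun u => by
  rw [Polynomial.eval_mul, Polynomial.eval_X, ← smul_eq_C_mul]
  exact Submodule.smul_mem _ u (hV u)

theorem C_sum_sub_X_mul_mem_twistedFamilies (f : MvPolynomial σ R) (a : σ → MvPolynomial σ R) :
    Polynomial.C (∑ i, a i * pderiv i f) - Polynomial.X * Polynomial.C (∑ i, pderiv i (a i)) ∈
      twistedFamilies f := fun u => by
  refine mem_twistedImage.2 ⟨a, ?_⟩
  simp only [twistedDeriv_apply, Finset.sum_sub_distrib, Finset.mul_sum, Polynomial.eval_sub,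
    Polynomial.eval_mul, Polynomial.eval_C, Polynomial.eval_X, smul_eq_C_mul, mul_comm (a _)]

theorem reducibleFamilies_mono : Monotone (reducibleFamilies w f d I) := fun _ _ hmn =>
  sup_le_sup_right (normalForms_mono hmn) _

theorem X_mul_mem_reducibleFamilies (hV : V ∈ reducibleFamilies w f d I m) :
    Polynomial.X * V ∈ reducibleFamilies w f d I (m + d) := by
  obtain ⟨N, hN, T, hT, rfl⟩ := Submodule.mem_sup.1 hV
  rw [mul_add]
  exact Submodule.add_mem_sup (X_mul_mem_normalForms hN) (X_mul_mem_twistedFamilies hT)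

namespace IsTame

variable {g : MvPolynomial σ R}

theorem C_mem_reducibleFamilies [Nontrivial R] [Nonempty σ] (h : IsTame w f g d I)
    {P : MvPolynomial σ R} (hP : P ∈ weightFiltration R w m) :
    Polynomial.C P ∈ reducibleFamilies w f d I m := by
  let L (k : ℤ) : Submodule R (MvPolynomial σ R) :=
    (reducibleFamilies w f d I k).comap Polynomial.CAlgHom.toLinearMap
  have hL : Monotone L := fun _ _ hmn => Submodule.comap_mono (reducibleFamilies_mono hmn)
  refine weightFiltration_le_of_isWeightedHomogeneous (fun i => (h.weight_pos i).le) hL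
    (fun m ih P hP => ?_) m hP
  obtain ⟨v, hvI, hv, a, ha, rfl⟩ := h.exists_isWeightedHomogeneous_decomposition hP
  have ha' (i : σ) := mem_weightFiltration_of_isWeightedHomogeneous (ha i)
  have hlow : ∑ i, a i * pderiv i (f - g) ∈ weightFiltration R w (m - 1) :=
    Submodule.sum_mem _ fun i _ => mem_weightFiltration_of_le
      (mul_mem_weightFiltration (ha' i) (pderiv_mem_weightFiltration h.sub_mem i)) (by linarith)
  have hdiv : ∑ i, pderiv i (a i) ∈ weightFiltration R w (m - d) :=
    Submodule.sum_mem _ fun i _ => mem_weightFiltration_of_le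
      (pderiv_mem_weightFiltration (ha' i) i) (by linarith)
  have hX := X_mul_mem_reducibleFamilies (ih (m - d) (by linarith [h.leadingWeight_pos]) hdiv)
  rw [sub_add_cancel] at hX
  have heq : Polynomial.C (v + ∑ i, a i * pderiv i g) = Polynomial.C v +
      (Polynomial.C (∑ i, a i * pderiv i f) -
        Polynomial.X * Polynomial.C (∑ i, pderiv i (a i))) +
      Polynomial.X * Polynomial.C (∑ i, pderiv i (a i)) -
      Polynomial.C (∑ i, a i * pderiv i (f - g)) := by
    simp only [map_sub, mul_sub, Finset.sum_sub_distrib, map_add]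
    ring
  change Polynomial.C _ ∈ reducibleFamilies w f d I m
  rw [heq]
  refine Submodule.sub_mem _ (add_mem (Submodule.add_mem_sup (C_mem_normalForms hvI
    (mem_weightFiltration_of_isWeightedHomogeneous hv))
    (C_sum_sub_X_mul_mem_twistedFamilies f a)) hX) ?_
  exact reducibleFamilies_mono (sub_one_lt m).le (ih (m - 1) (sub_one_lt m) hlow)

theorem sum_zsmul_X_mul_pderiv_sub_mem (h : IsTame w f g d I) :
    ∑ i, w i • (X i * pderiv i f) - d • f ∈ weightFiltration R w (d - 1) := by
  have heq : ∑ i, w i • (X i * pderiv i f) - d • f =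
      ∑ i, w i • (X i * pderiv i (f - g)) - d • (f - g) := by
    simp only [map_sub, mul_sub, smul_sub, Finset.sum_sub_distrib,
      sum_zsmul_X_mul_pderiv h.isWeightedHomogeneous]
    ring
  rw [heq]
  refine Submodule.sub_mem _ (Submodule.sum_mem _ fun i _ => zsmul_mem ?_ _)
    (zsmul_mem h.sub_mem d)
  exact mem_weightFiltration_of_le (mul_mem_weightFiltration
    (mem_weightFiltration_of_isWeightedHomogeneous (isWeightedHomogeneous_X R w i))
    (pderiv_mem_weightFiltration h.sub_mem i)) (by linarith)

theorem C_mul_sub_zsmul_mem_reducibleFamilies_of_isWeightedHomogeneous [Nontrivial R] [Nonempty σ]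
    (h : IsTame w f g d I) {Q : MvPolynomial σ R} (hQ : IsWeightedHomogeneous w Q m) :
    d • Polynomial.C (f * Q) - (∑ i, w i + m) • (Polynomial.X * Polynomial.C Q) ∈
      reducibleFamilies w f d I (m + d - 1) := by
  have hE : (∑ i, w i • (X i * pderiv i f) - d • f) * Q ∈ weightFiltration R w (m + d - 1) :=
    mem_weightFiltration_of_le (mul_mem_weightFiltration h.sum_zsmul_X_mul_pderiv_sub_mem
      (mem_weightFiltration_of_isWeightedHomogeneous hQ)) (by linarith)
  have hsum : ∑ i, w i • (X i * Q) * pderiv i f =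
      (∑ i, w i • (X i * pderiv i f) - d • f) * Q + d • (f * Q) := by
    rw [sub_mul, smul_mul_assoc, sub_add_cancel, Finset.sum_mul]
    exact Finset.sum_congr rfl fun i _ => by simp only [smul_mul_assoc, mul_right_comm]
  have hrel := C_sum_sub_X_mul_mem_twistedFamilies f fun i => w i • (X i * Q)
  rw [hsum, sum_pderiv_zsmul_X_mul hQ, map_add, map_zsmul, map_zsmul, mul_smul_comm,
    add_sub_assoc] at hrel
  simpa only [add_sub_cancel_left] using Submodule.sub_mem (reducibleFamilies w f d I _)
    (Submodule.mem_sup_right hrel) (h.C_mem_reducibleFamilies hE)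

theorem C_mul_sub_zsmul_mem_reducibleFamilies [Nontrivial R] [Nonempty σ] (h : IsTame w f g d I)
    {Q : MvPolynomial σ R} (hQ : Q ∈ weightFiltration R w m) :
    d • Polynomial.C (f * Q) - (∑ i, w i + m) • (Polynomial.X * Polynomial.C Q) ∈
      reducibleFamilies w f d I (m + d - 1) := by
  let top := weightedHomogeneousComponent w m Q
  have hlow : Q - top ∈ weightFiltration R w (m - 1) := sub_weightedHomogeneousComponent_mem hQ
  have htop := h.C_mul_sub_zsmul_mem_reducibleFamilies_of_isWeightedHomogeneous
    (weightedHomogeneousComponent_isWeightedHomogeneous m Q)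
  have hf : Polynomial.C (f * (Q - top)) ∈ reducibleFamilies w f d I (m + d - 1) :=
    h.C_mem_reducibleFamilies (mem_weightFiltration_of_le
      (mul_mem_weightFiltration h.mem_weightFiltration hlow) (by linarith))
  have hX : Polynomial.X * Polynomial.C (Q - top) ∈ reducibleFamilies w f d I (m + d - 1) := by
    rw [add_sub_right_comm]
    exact X_mul_mem_reducibleFamilies (h.C_mem_reducibleFamilies hlow)
  have heq : d • Polynomial.C (f * Q) - (∑ i, w i + m) • (Polynomial.X * Polynomial.C Q) =
      d • Polynomial.C (f * top) - (∑ i, w i + m) • (Polynomial.X * Polynomial.C top) +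
      (d • Polynomial.C (f * (Q - top)) -
        (∑ i, w i + m) • (Polynomial.X * Polynomial.C (Q - top))) := by
    simp only [mul_sub, map_sub, smul_sub]
    abel
  rw [heq]
  exact add_mem htop (Submodule.sub_mem _ (zsmul_mem hf _) (zsmul_mem hX _))

end IsTame

end Families

section NormalForms

variable {σ K : Type*} [Field K] [CharZero K] [Fintype σ] {w : σ → ℤ} {f g : MvPolynomial σ K}
  {d m : ℤ} {I : Finset (σ →₀ ℕ)} {V : Polynomial (MvPolynomial σ K)}

namespace IsTame

theorem eq_zero_of_mem_twistedFamilies (h : IsTame w f g d I)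
    (hVI : ∀ j, V.coeff j ∈ restrictSupport K (I : Set (σ →₀ ℕ)))
    (hV : V ∈ twistedFamilies f) : V = 0 := by
  have hroot (u : K) : V.IsRoot (C u) := by
    refine h.eq_zero_of_mem_twistedImage (u := u) ?_ (hV u)
    rw [Polynomial.eval_eq_sum]
    refine Submodule.sum_mem _ fun j _ => ?_
    beta_reduce
    rw [mul_comm, ← C_pow, ← smul_eq_C_mul]
    exact Submodule.smul_mem _ _ (hVI j)
  exact Polynomial.eq_zero_of_infinite_isRoot V
    ((Set.infinite_range_of_injective (C_injective σ K)).mono (Set.range_subset_iff.2 hroot))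

theorem mem_normalForms_of_mem_reducibleFamilies (h : IsTame w f g d I) {k : ℤ}
    (hVk : V ∈ normalForms w d I k) (hV : V ∈ reducibleFamilies w f d I m) :
    V ∈ normalForms w d I m := by
  obtain ⟨N, hN, T, hT, rfl⟩ := Submodule.mem_sup.1 hV
  have hT0 : T = 0 := h.eq_zero_of_mem_twistedFamilies (fun j => by
    simpa using Submodule.sub_mem _ (hVk j).1 (hN j).1) hT
  rwa [hT0, add_zero]

/-- The constant `κ` is the product of the factors `(∑ wᵢ + m + k d) / d` for `k < j`, which come
from Euler's identity. -/
theorem exists_C_pow_mul_sub_smul_mem_reducibleFamilies [Nonempty σ] (h : IsTame w f g d I)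
    {Q : MvPolynomial σ K} (hQ : Q ∈ weightFiltration K w m) (j : ℕ) :
    ∃ κ : K, κ ≠ 0 ∧ Polynomial.C (f ^ j * Q) - κ • (Polynomial.X ^ j * Polynomial.C Q) ∈
      reducibleFamilies w f d I (m + j * d - 1) := by
  have hd := h.leadingWeight_pos
  obtain hm | hm := lt_or_ge m 0
  · rw [eq_zero_of_mem_weightFiltration (fun i => (h.weight_pos i).le) hQ hm]
    exact ⟨1, one_ne_zero, by simp⟩
  induction j with
  | zero => exact ⟨1, one_ne_zero, by simp⟩
  | succ j ih =>
    obtain ⟨κ, hκ, hj⟩ := ih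
    have hc : 0 < ∑ i, w i + (m + j * d) :=
      add_pos_of_pos_of_nonneg (Finset.sum_pos (fun i _ => h.weight_pos i) Finset.univ_nonempty)
        (by positivity)
    have hfQ := h.C_mul_sub_zsmul_mem_reducibleFamilies
      (pow_mul_mem_weightFiltration h.mem_weightFiltration hQ j)
    have hX := X_mul_mem_reducibleFamilies hj
    rw [sub_add_eq_add_sub] at hX
    rw [← Int.cast_smul_eq_zsmul K, ← Int.cast_smul_eq_zsmul K (_ + _)] at hfQ
    have hdK : (d : K) ≠ 0 := by exact_mod_cast hd.ne'
    refine ⟨(d : K)⁻¹ * ((∑ i, w i + (m + j * d) : ℤ) : K) * κ, mul_ne_zero (mul_ne_zero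
      (inv_ne_zero hdK) (by exact_mod_cast hc.ne')) hκ, ?_⟩
    have hmem := Submodule.smul_mem _ (d : K)⁻¹ (add_mem hfQ
      (Submodule.smul_mem _ ((∑ i, w i + (m + j * d) : ℤ) : K) hX))
    convert hmem using 1
    · rw [Nat.cast_succ]
      congr 1
      ring
    · rw [mul_sub, smul_sub, sub_add_sub_cancel, smul_sub, inv_smul_smul₀ hdK, pow_succ', pow_succ',
        mul_smul_comm, smul_smul, smul_smul, mul_assoc, mul_assoc, mul_assoc]

theorem mem_normalForms_sub_one [Nonempty σ] (h : IsTame w f g d I)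
    (hV : V ∈ normalForms w d I m) (hVf : Polynomial.C (V.eval f) ∈ twistedFamilies f) :
    V ∈ normalForms w d I (m - 1) := by
  choose κ hκ hκV using fun j : ℕ =>
    h.exists_C_pow_mul_sub_smul_mem_reducibleFamilies (hV j).2 j
  let U := ∑ j ∈ V.support, κ j • (Polynomial.X ^ j * Polynomial.C (V.coeff j))
  have hU_coeff (j : ℕ) : U.coeff j = κ j • V.coeff j := by
    simp only [U, Polynomial.finsetSum_coeff, Polynomial.coeff_smul,
      Polynomial.X_pow_mul_C, Polynomial.coeff_C_mul_X_pow, smul_ite, smul_zero,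
      Finset.sum_ite_eq]
    split_ifs with hj
    · rfl
    · rw [Polynomial.notMem_support_iff.1 hj, smul_zero]
  have hU : U ∈ normalForms w d I m := fun j =>
    hU_coeff j ▸ Submodule.smul_mem _ (κ j) (hV j)
  have hVf_eq : Polynomial.C (V.eval f) =
      ∑ j ∈ V.support, Polynomial.C (f ^ j * V.coeff j) := by
    rw [Polynomial.eval_eq_sum, Polynomial.sum_def, map_sum]
    exact Finset.sum_congr rfl fun j _ => by rw [mul_comm]
  have hdiff : Polynomial.C (V.eval f) - U ∈ reducibleFamilies w f d I (m - 1) := by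
    rw [hVf_eq, ← Finset.sum_sub_distrib]
    refine Submodule.sum_mem _ fun j _ => ?_
    simpa only [sub_add_cancel] using hκV j
  have hU_red : U ∈ reducibleFamilies w f d I (m - 1) := by
    simpa only [sub_sub_cancel] using
      Submodule.sub_mem (reducibleFamilies w f d I _) (Submodule.mem_sup_right hVf) hdiff
  intro j
  have hUj := h.mem_normalForms_of_mem_reducibleFamilies hU hU_red j
  rw [hU_coeff] at hUj
  exact (Submodule.smul_mem_iff _ (hκ j)).1 hUj

theorem eq_zero_of_C_eval_mem_twistedFamilies [Nonempty σ] (h : IsTame w f g d I)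
    (hV : V ∈ normalForms w d I m) (hVf : Polynomial.C (V.eval f) ∈ twistedFamilies f) :
    V = 0 := by
  suffices ∀ k ≤ m, V ∈ normalForms w d I k by
    ext1 j
    refine eq_zero_of_mem_weightFiltration (fun i => (h.weight_pos i).le)
      (this (min m (-1)) (min_le_left _ _) j).2 ?_
    have : 0 ≤ j * d := mul_nonneg j.cast_nonneg h.leadingWeight_pos.le
    omega
  exact Int.leInductionDown hV fun k _ hk => h.mem_normalForms_sub_one hk hVf

end IsTame

end NormalForms

section Brieskorn

variable {σ R : Type*} [CommRing R]

/-- The span of the polynomials `(∂f/∂xᵢ)(∂h/∂xⱼ) - (∂f/∂xⱼ)(∂h/∂xᵢ)`, that is, of the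
coefficients of the forms in `df ∧ dΩⁿ⁻¹` in `n + 1` variables. -/
noncomputable def brieskornSubmodule (f : MvPolynomial σ R) : Submodule R (MvPolynomial σ R) :=
  Submodule.span R {P | ∃ (h : MvPolynomial σ R) (i j : σ),
    P = pderiv i f * pderiv j h - pderiv j f * pderiv i h}

theorem sub_mem_brieskornSubmodule (f h : MvPolynomial σ R) (i j : σ) :
    pderiv i f * pderiv j h - pderiv j f * pderiv i h ∈ brieskornSubmodule f :=
  Submodule.subset_span ⟨h, i, j, rfl⟩

theorem span_lt_eq_brieskornSubmodule [LinearOrder σ] (f : MvPolynomial σ R) :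
    Submodule.span R {P | ∃ (h : MvPolynomial σ R) (i j : σ), i < j ∧
      P = pderiv i f * pderiv j h - pderiv j f * pderiv i h} = brieskornSubmodule f := by
  refine le_antisymm (Submodule.span_mono fun _ ⟨h, i, j, _, hP⟩ => ⟨h, i, j, hP⟩)
    (Submodule.span_le.2 ?_)
  rintro _ ⟨h, i, j, rfl⟩
  obtain hij | rfl | hij := lt_trichotomy i j
  · exact Submodule.subset_span ⟨h, i, j, hij, rfl⟩
  · simp
  · rw [← neg_sub]
    exact Submodule.neg_mem _ (Submodule.subset_span ⟨h, j, i, hij, rfl⟩)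

theorem mul_mem_brieskornSubmodule {f P : MvPolynomial σ R} (hP : P ∈ brieskornSubmodule f) :
    f * P ∈ brieskornSubmodule f := by
  induction hP using Submodule.span_induction with
  | mem P hP =>
    obtain ⟨h, i, j, rfl⟩ := hP
    convert sub_mem_brieskornSubmodule f (f * h) i j using 1
    rw [pderiv_mul, pderiv_mul]
    ring
  | zero => simp
  | add P Q _ _ hP hQ => simpa only [mul_add] using add_mem hP hQ
  | smul c P _ hP => simpa only [mul_smul_comm] using Submodule.smul_mem _ c hP

theorem brieskornSubmodule_le_twistedImage [Fintype σ] (f : MvPolynomial σ R) (u : R) :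
    brieskornSubmodule f ≤ twistedImage f u := by
  refine Submodule.span_le.2 ?_
  rintro _ ⟨h, i, j, rfl⟩
  have heq : pderiv i f * pderiv j h - pderiv j f * pderiv i h =
      twistedDeriv f u i (pderiv j h) - twistedDeriv f u j (pderiv i h) := by
    rw [twistedDeriv_apply, twistedDeriv_apply, pderiv_pderiv_comm i j]
    ring
  rw [heq]
  exact Submodule.sub_mem _ (twistedDeriv_mem_twistedImage f u i _)
    (twistedDeriv_mem_twistedImage f u j _)

theorem C_mem_twistedFamilies_of_mem_brieskornSubmodule [Fintype σ] {f P : MvPolynomial σ R}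
    (hP : P ∈ brieskornSubmodule f) : Polynomial.C P ∈ twistedFamilies f := fun u => by
  rw [Polynomial.eval_C]
  exact brieskornSubmodule_le_twistedImage f u hP

variable {K : Type*} [Field K] [CharZero K]

theorem exists_pderiv_eq (i : σ) (Q : MvPolynomial σ K) :
    ∃ h, pderiv i h = Q ∧ ∀ j ≠ i, pderiv j Q = 0 → pderiv j h = 0 := by
  refine ⟨∑ s ∈ Q.support, monomial (s + Finsupp.single i 1) (coeff s Q / (s i + 1)), ?_,
    fun j hji hj => ?_⟩
  · conv_rhs => rw [← support_sum_monomial_coeff Q]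
    rw [map_sum]
    refine Finset.sum_congr rfl fun s _ => ?_
    have hs : (s i + 1 : K) ≠ 0 := s i |>.cast_add_one_ne_zero
    simp [pderiv_monomial, hs]
  · rw [map_sum]
    refine Finset.sum_eq_zero fun s hs => ?_
    have hsj : (s j : K) = 0 := by
      have hcoeff := coeff_X_mul_pderiv j Q s
      rw [hj, mul_zero, coeff_zero, eq_comm] at hcoeff
      exact (mul_eq_zero.1 hcoeff).resolve_right (mem_support_iff.1 hs)
    simp [pderiv_monomial, hji, hsj]

/-- A divergence-free vector field `a` corresponds to a closed `n`-form, which by the polynomial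
Poincaré lemma is exact; so its product with `df` is the product of `df` with an exact form. -/
theorem sum_mul_pderiv_mem_brieskornSubmodule [Fintype σ] [Nontrivial σ] (f : MvPolynomial σ K)
    {a : σ → MvPolynomial σ K} (ha : ∑ i, pderiv i (a i) = 0) :
    ∑ i, a i * pderiv i f ∈ brieskornSubmodule f := by
  obtain ⟨k, l, hkl⟩ := exists_pair_ne σ
  choose h hh _ using fun i => exists_pderiv_eq k (a i)
  have hdiv : pderiv k (∑ i, pderiv i (h i)) = 0 := by
    simp only [map_sum, pderiv_pderiv_comm k, hh, ha]
  obtain ⟨q, hql, hqk⟩ := exists_pderiv_eq l (∑ i, pderiv i (h i))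
  have heq : ∑ i, a i * pderiv i f =
      ∑ i, (pderiv i f * pderiv k (h i) - pderiv k f * pderiv i (h i)) +
        (pderiv k f * pderiv l q - pderiv l f * pderiv k q) := by
    rw [hqk k hkl hdiv, hql, Finset.sum_sub_distrib, ← Finset.mul_sum, mul_zero, sub_zero,
      sub_add_cancel]
    exact Finset.sum_congr rfl fun i _ => by rw [hh, mul_comm]
  rw [heq]
  exact add_mem (Submodule.sum_mem _ fun i _ => sub_mem_brieskornSubmodule f (h i) i k)
    (sub_mem_brieskornSubmodule f q k l)

end Brieskorn

section Combination

variable {σ R : Type*} [CommRing R]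

/-- The map sending a family `c` of univariate polynomials to `∑ β ∈ I, c_β(f) x^β`. -/
noncomputable def monomialCombination (f : MvPolynomial σ R) (I : Finset (σ →₀ ℕ)) :
    (I → Polynomial R) →ₗ[R] MvPolynomial σ R :=
  ∑ β : I, LinearMap.mulRight R (monomial (β : σ →₀ ℕ) 1) ∘ₗ (Polynomial.aeval f).toLinearMap ∘ₗ
    LinearMap.proj β

variable {f : MvPolynomial σ R} {I : Finset (σ →₀ ℕ)}

theorem monomialCombination_apply (c : I → Polynomial R) :
    monomialCombination f I c = ∑ β : I, Polynomial.aeval f (c β) * monomial (β : σ →₀ ℕ) 1 := by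
  simp [monomialCombination]

theorem mul_mem_range_monomialCombination {P : MvPolynomial σ R}
    (hP : P ∈ LinearMap.range (monomialCombination f I)) :
    f * P ∈ LinearMap.range (monomialCombination f I) := by
  obtain ⟨c, rfl⟩ := hP
  refine ⟨fun β => Polynomial.X * c β, ?_⟩
  simp only [monomialCombination_apply, map_mul, Polynomial.aeval_X, mul_assoc, Finset.mul_sum]

theorem restrictSupport_le_range_monomialCombination :
    restrictSupport R (I : Set (σ →₀ ℕ)) ≤ LinearMap.range (monomialCombination f I) := by
  classical
  rw [restrictSupport_eq_span, Submodule.span_le]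
  rintro _ ⟨s, hs, rfl⟩
  refine ⟨Pi.single ⟨s, hs⟩ 1, ?_⟩
  rw [monomialCombination_apply, Finset.sum_eq_single_of_mem ⟨s, hs⟩ (Finset.mem_univ _)]
  · simp
  · intro β _ hβ
    rw [Pi.single_eq_of_ne hβ, map_zero, zero_mul]

theorem exists_mem_normalForms (w : σ → ℤ) (d : ℤ) {V : Polynomial (MvPolynomial σ R)}
    (hV : ∀ j, V.coeff j ∈ restrictSupport R (I : Set (σ →₀ ℕ))) :
    ∃ m, V ∈ normalForms w d I m := by
  choose e he using fun j => exists_mem_weightFiltration w (V.coeff j)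
  obtain ⟨m, hm⟩ := (V.support.image fun j => e j + j * d).bddAbove
  refine ⟨m, fun j => ⟨hV j, ?_⟩⟩
  by_cases hj : j ∈ V.support
  · have := hm (Finset.mem_coe.2 (Finset.mem_image_of_mem _ hj))
    exact mem_weightFiltration_of_le (he j) (by linarith)
  · rw [Polynomial.notMem_support_iff.1 hj]
    exact zero_mem _

end Combination

section Basis

variable {σ K : Type*} [Field K] {f : MvPolynomial σ K} {I : Finset (σ →₀ ℕ)}

theorem exists_isWeightedHomogeneous_sum_pderiv_eq [Fintype σ] [Nonempty σ] [CharZero K]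
    {w : σ → ℤ} (hw : ∀ i, 0 < w i) {m : ℤ} {Q : MvPolynomial σ K}
    (hQ : IsWeightedHomogeneous w Q m) :
    ∃ b, IsWeightedHomogeneous w b m ∧ ∑ i, pderiv i (w i • (X i * b)) = Q := by
  obtain hm | hm := lt_or_ge m 0
  · refine ⟨0, isWeightedHomogeneous_zero K w m, ?_⟩
    simp [eq_zero_of_mem_weightFiltration (fun i => (hw i).le)
      (mem_weightFiltration_of_isWeightedHomogeneous hQ) hm]
  · have hc : 0 < ∑ i, w i + m := add_pos_of_pos_of_nonneg
      (Finset.sum_pos (fun i _ => hw i) Finset.univ_nonempty) hm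
    have hb : IsWeightedHomogeneous w (((∑ i, w i + m : ℤ) : K)⁻¹ • Q) m :=
      (weightedHomogeneousSubmodule K w m).smul_mem _ hQ
    refine ⟨_, hb, ?_⟩
    rw [sum_pderiv_zsmul_X_mul hb, ← Int.cast_smul_eq_zsmul K,
      smul_inv_smul₀ (Int.cast_ne_zero.2 hc.ne')]

namespace IsTame

variable [CharZero K] [Finite σ] {w : σ → ℤ} {g : MvPolynomial σ K} {d : ℤ}

theorem range_monomialCombination_sup_eq_top [Nontrivial σ] (h : IsTame w f g d I) :
    LinearMap.range (monomialCombination f I) ⊔ brieskornSubmodule f = ⊤ := by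
  cases nonempty_fintype σ
  set S := LinearMap.range (monomialCombination f I) ⊔ brieskornSubmodule f
  have hS_mul {P : MvPolynomial σ K} (hP : P ∈ S) : f * P ∈ S := by
    obtain ⟨Q, hQ, R, hR, rfl⟩ := Submodule.mem_sup.1 hP
    rw [mul_add]
    exact Submodule.add_mem_sup (mul_mem_range_monomialCombination hQ)
      (mul_mem_brieskornSubmodule hR)
  suffices ∀ m, weightFiltration K w m ≤ S from eq_top_iff.2 fun P _ =>
    let ⟨m, hm⟩ := exists_mem_weightFiltration w P
    this m hm
  refine weightFiltration_le_of_isWeightedHomogeneous (fun i => (h.weight_pos i).le)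
    monotone_const fun m ih P hP => ?_
  obtain ⟨v, hvI, -, a, ha, rfl⟩ := h.exists_isWeightedHomogeneous_decomposition hP
  have hdiv : IsWeightedHomogeneous w (∑ i, pderiv i (a i)) (m - d) :=
    IsWeightedHomogeneous.sum _ _ _ fun i _ => (ha i).pderiv (by ring)
  obtain ⟨b, hb, hab⟩ := exists_isWeightedHomogeneous_sum_pderiv_eq h.weight_pos hdiv
  have hbF := mem_weightFiltration_of_isWeightedHomogeneous hb
  have hclosed : ∑ i, (a i - w i • (X i * b)) * pderiv i f ∈ S :=
    Submodule.mem_sup_right (sum_mul_pderiv_mem_brieskornSubmodule f (by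
      simp only [map_sub, Finset.sum_sub_distrib, hab, sub_self]))
  have hlow : (∑ i, w i • (X i * pderiv i f) - d • f) * b - ∑ i, a i * pderiv i (f - g) ∈ S := by
    refine ih (m - 1) (sub_one_lt m) (Submodule.sub_mem _ ?_ (Submodule.sum_mem _ fun i _ => ?_))
    · exact mem_weightFiltration_of_le
        (mul_mem_weightFiltration h.sum_zsmul_X_mul_pderiv_sub_mem hbF) (by linarith)
    · exact mem_weightFiltration_of_le (mul_mem_weightFiltration
        (mem_weightFiltration_of_isWeightedHomogeneous (ha i))
        (pderiv_mem_weightFiltration h.sub_mem i)) (by linarith)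
  have hfb : d • (f * b) ∈ S :=
    zsmul_mem (hS_mul (ih (m - d) (by linarith [h.leadingWeight_pos]) hbF)) d
  have hv : v ∈ S := Submodule.mem_sup_left (restrictSupport_le_range_monomialCombination hvI)
  have heq : v + ∑ i, a i * pderiv i g = v + ∑ i, (a i - w i • (X i * b)) * pderiv i f +
      ((∑ i, w i • (X i * pderiv i f) - d • f) * b - ∑ i, a i * pderiv i (f - g)) +
      d • (f * b) := by
    simp only [map_sub, mul_sub, sub_mul, Finset.sum_sub_distrib, Finset.sum_mul, smul_mul_assoc,
      mul_right_comm]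
    abel
  rw [heq]
  exact add_mem (add_mem (add_mem hv hclosed) hlow) hfb

theorem eq_zero_of_monomialCombination_mem [Nonempty σ] (h : IsTame w f g d I)
    {c : I → Polynomial K} (hc : monomialCombination f I c ∈ brieskornSubmodule f) : c = 0 := by
  classical
  cases nonempty_fintype σ
  let V : Polynomial (MvPolynomial σ K) :=
    ∑ β : I, (c β).map C * Polynomial.C (monomial (β : σ →₀ ℕ) 1)
  have hV_coeff (j : ℕ) : V.coeff j = ∑ β : I, monomial (β : σ →₀ ℕ) ((c β).coeff j) := by
    simp [V, Polynomial.finsetSum_coeff, C_mul_monomial]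
  have hV_eval : V.eval f = monomialCombination f I c := by
    simp [V, monomialCombination_apply, Polynomial.eval_finsetSum, Polynomial.eval_map,
      Polynomial.aeval_def, algebraMap_eq]
  obtain ⟨m, hm⟩ := exists_mem_normalForms (I := I) w d (V := V) fun j => by
    rw [hV_coeff]
    exact Submodule.sum_mem _ fun β _ => (monomial_mem_restrictSupport K).2 (Or.inl β.2)
  have hV0 : V = 0 := h.eq_zero_of_C_eval_mem_twistedFamilies hm
    (C_mem_twistedFamilies_of_mem_brieskornSubmodule (hV_eval ▸ hc))
  ext β j
  have hβ := congrArg (coeff (β : σ →₀ ℕ)) (hV_coeff j)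
  simpa [hV0, coeff_sum, coeff_monomial, Subtype.coe_inj] using hβ.symm

theorem existsUnique_mk_eq_mk_monomialCombination [Nontrivial σ] (h : IsTame w f g d I)
    (v : MvPolynomial σ K ⧸ brieskornSubmodule f) :
    ∃! c : I → Polynomial K, v = Submodule.Quotient.mk (monomialCombination f I c) := by
  obtain ⟨P, rfl⟩ := Submodule.Quotient.mk_surjective _ v
  obtain ⟨_, ⟨c, rfl⟩, Q, hQ, rfl⟩ := Submodule.mem_sup.1
    (h.range_monomialCombination_sup_eq_top.ge (Submodule.mem_top (x := P)))
  refine ⟨c, (Submodule.Quotient.eq _).2 (by simpa using hQ), fun c' hc' => ?_⟩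
  refine sub_eq_zero.1 (h.eq_zero_of_monomialCombination_mem ?_)
  convert Submodule.sub_mem _ hQ ((Submodule.Quotient.eq _).1 hc') using 1
  rw [map_sub]
  abel

end IsTame

end Basis

theorem brieskorn_Hpp_free_general {σ K : Type*} [Finite σ] [Nontrivial σ] [LinearOrder σ]
    [Field K] [CharZero K] (α : σ → ℕ) (hαpos : ∀ i, 0 < α i) (f : MvPolynomial σ K) (d : ℕ)
    (hd : weightedTotalDegree α f = d) (g : MvPolynomial σ K)
    (hg : g = weightedHomogeneousComponent α d f) (I : Finset (σ →₀ ℕ))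
    (hIindep : LinearIndependent K (fun β : I =>
      Ideal.Quotient.mk (Ideal.span (Set.range fun i => pderiv i g))
        (monomial (β : σ →₀ ℕ) (1 : K))))
    (hIspan : Submodule.span K (Set.range fun β : I =>
      Ideal.Quotient.mk (Ideal.span (Set.range fun i => pderiv i g))
        (monomial (β : σ →₀ ℕ) (1 : K))) = ⊤)
    (J : Submodule K (MvPolynomial σ K))
    (hJ : J = Submodule.span K {P : MvPolynomial σ K | ∃ (h : MvPolynomial σ K) (i j : σ), i < j ∧
      P = pderiv i f * pderiv j h - pderiv j f * pderiv i h}) :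
    (∀ P ∈ J, f * P ∈ J) ∧
    ∀ v : MvPolynomial σ K ⧸ J, ∃! c : {β // β ∈ I} → Polynomial K,
      v = ∑ β ∈ I.attach, Submodule.Quotient.mk
        (Polynomial.aeval f (c β) * monomial (β : σ →₀ ℕ) (1 : K)) := by
  obtain rfl : J = brieskornSubmodule f := hJ.trans (span_lt_eq_brieskornSubmodule f)
  refine ⟨fun P hP => mul_mem_brieskornSubmodule hP, fun v => ?_⟩
  have hmk (c : I → Polynomial K) :
      Submodule.Quotient.mk (p := brieskornSubmodule f) (monomialCombination f I c) =
        ∑ β ∈ I.attach, Submodule.Quotient.mk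
          (Polynomial.aeval f (c β) * monomial (β : σ →₀ ℕ) 1) := by
    rw [monomialCombination_apply]
    exact map_sum (brieskornSubmodule f).mkQ _ _
  have hf : IsTame (fun i => (α i : ℤ)) f g d I := .of_weightedTotalDegree_eq hαpos hd hg
    (isCompl_restrictSupport_of_basis_quotient hIindep hIspan)
  simpa only [hmk] using hf.existsUnique_mk_eq_mk_monomialCombination v

/-- Let `f` be strongly tame and `J ⊆ ℂ[x]` the ℂ-linear span of the
polynomials `(∂f/∂xᵢ)(∂h/∂xⱼ) - (∂f/∂xⱼ)(∂h/∂xᵢ)`, `h ∈ ℂ[x]`, `i < j` (the coefficients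
of the forms in `df ∧ dΩ^{n-1}`).  Then `J` is stable under multiplication by `f`, so
`ℂ[x]/J` is a `ℂ[t]`-module with `t` acting as multiplication by `f`, and the classes of
the monomials `x^β`, `β ∈ I`, form a basis of `ℂ[x]/J` as a free `ℂ[t]`-module of rank
`μ = #I`: every class has a unique representation `Σ_{β∈I} c_β(f)·x^β` with
`c_β ∈ ℂ[t]`.  (This says the forms `ω_β = x^β dx` freely generate the Brieskorn module
`H'' = Ω^{n+1}/(df ∧ dΩ^{n-1})` over `ℂ[t]`.) -/
theorem brieskorn_Hpp_free
    (n : ℕ) (hn : 1 ≤ n) (α : Fin (n + 1) → ℕ)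
    (hαpos : ∀ i, 0 < α i) (hα : Finset.univ.gcd α = 1)
    (f : MvPolynomial (Fin (n + 1)) ℂ) (d : ℕ)
    (hd : MvPolynomial.weightedTotalDegree α f = d)
    (g : MvPolynomial (Fin (n + 1)) ℂ)
    (hg : g = weightedHomogeneousComponent α d f)
    (hg0 : g ≠ 0)
    (htame : ∀ x : Fin (n + 1) → ℂ, (∀ i, eval x (pderiv i g) = 0) → x = 0)
    (I : Finset (Fin (n + 1) →₀ ℕ))
    (hIindep : LinearIndependent ℂ (fun β : I =>
      Ideal.Quotient.mk (Ideal.span (Set.range fun i => pderiv i g))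
        (monomial (β : Fin (n + 1) →₀ ℕ) (1 : ℂ))))
    (hIspan : Submodule.span ℂ (Set.range fun β : I =>
      Ideal.Quotient.mk (Ideal.span (Set.range fun i => pderiv i g))
        (monomial (β : Fin (n + 1) →₀ ℕ) (1 : ℂ))) = ⊤)
    (J : Submodule ℂ (MvPolynomial (Fin (n + 1)) ℂ))
    (hJ : J = Submodule.span ℂ
      {P : MvPolynomial (Fin (n + 1)) ℂ |
        ∃ (h : MvPolynomial (Fin (n + 1)) ℂ) (i j : Fin (n + 1)), i < j ∧
          P = pderiv i f * pderiv j h - pderiv j f * pderiv i h}) :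
    (∀ P ∈ J, f * P ∈ J) ∧
    ∀ v : MvPolynomial (Fin (n + 1)) ℂ ⧸ J,
      ∃! c : {β // β ∈ I} → Polynomial ℂ,
        v = ∑ β ∈ I.attach, Submodule.Quotient.mk
          (Polynomial.aeval f (c β) * monomial (β : Fin (n + 1) →₀ ℕ) (1 : ℂ)) := by
  have : Nontrivial (Fin (n + 1)) := Fin.nontrivial_iff_two_le.2 (Nat.succ_le_succ hn)
  exact brieskorn_Hpp_free_general α hαpos f d hd g hg I hIindep hIspan J hJ
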